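/- Let (u^k, E^k) and (u, E) be admissible pairs and let p^k, p ∈ L²(Ω; Sym(n)). Assume: u^k → u strongly in L²(ℝⁿ; ℝⁿ); for every k and every admissible pair (v, F): ∫_Ω p^k·F dx = 0; and p^k → p weakly in L²(Ω; Sym(n)). Then for every φ ∈ C^∞(ℝⁿ; ℝ) which is bounded and has bounded gradient, ∫_{ℝⁿ} φ (p^k·E^k) dx → ∫_{ℝⁿ} φ (p·E) dx, where p^k, p are extended by zero outside Ω. -/

import Mathlib

open MeasureTheory Filter Topology

noncomputable section

abbrev RV (n : ℕ) := Fin n → ℝ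
abbrev Mat (n : ℕ) := Matrix (Fin n) (Fin n) ℝ
abbrev MField (n : ℕ) := RV n → Mat n
abbrev VField (n : ℕ) := RV n → RV n

/-- Frobenius inner product of matrices: `P·Q = ∑ᵢⱼ Pᵢⱼ Qᵢⱼ`. -/
def mdot {n : ℕ} (P Q : Mat n) : ℝ := ∑ i, ∑ j, P i j * Q i j

/-- A matrix field takes symmetric values a.e. on `s`. -/
def SymOn {n : ℕ} (E : MField n) (s : Set (RV n)) : Prop :=
  ∀ᵐ x ∂(volume : Measure (RV n)), x ∈ s → ∀ i j, E x i j = E x j i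

/-- Matrix field in L² on `s`: componentwise measurable and `|E|²` integrable on `s`. -/
def L2MOn {n : ℕ} (E : MField n) (s : Set (RV n)) : Prop :=
  (∀ i j, Measurable fun x => E x i j) ∧
    IntegrableOn (fun x => mdot (E x) (E x)) s volume

/-- Vector field in L² on `s`. -/
def L2VOn {n : ℕ} (u : VField n) (s : Set (RV n)) : Prop :=
  (∀ i, Measurable fun x => u x i) ∧
    IntegrableOn (fun x => ∑ i, u x i * u x i) s volume

/-- Scalar function in L∞ on `s`. -/
def LinfROn {n : ℕ} (f : RV n → ℝ) (s : Set (RV n)) : Prop :=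
  Measurable f ∧ ∃ M : ℝ, ∀ᵐ x ∂(volume : Measure (RV n)), x ∈ s → |f x| ≤ M

/-- Matrix field in L∞ on `s`. -/
def LinfMOn {n : ℕ} (F : MField n) (s : Set (RV n)) : Prop :=
  (∀ i j, Measurable fun x => F x i j) ∧
    ∃ M : ℝ, ∀ᵐ x ∂(volume : Measure (RV n)), x ∈ s → ∀ i j, |F x i j| ≤ M

/-- `E` is the weak symmetrized gradient of `u`:
for all `i j` and every test function `φ ∈ C_c^∞(ℝⁿ)`,
`∫ Eᵢⱼ φ = -(1/2) ∫ (uᵢ ∂ⱼφ + uⱼ ∂ᵢφ)`. -/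
def IsSymGrad {n : ℕ} (u : VField n) (E : MField n) : Prop :=
  ∀ i j, ∀ φ : RV n → ℝ, ContDiff ℝ (⊤ : ℕ∞) φ → HasCompactSupport φ →
    ∫ x, E x i j * φ x =
      -(1 / 2) * ∫ x, (u x i * fderiv ℝ φ x (Pi.single j 1) +
        u x j * fderiv ℝ φ x (Pi.single i 1))

/-- Admissible pair: the encoding of `v ∈ H¹₀(Ω;ℝⁿ)` together with its symmetrized
gradient `ε(v)`. -/
structure AdmPair (n : ℕ) (Ω : Set (RV n)) where
  u : VField n
  E : MField n
  hu : L2VOn u Set.univ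
  hE : L2MOn E Set.univ
  hsym : SymOn E Set.univ
  huz : ∀ᵐ x ∂(volume : Measure (RV n)), x ∉ Ω → u x = 0
  hEz : ∀ᵐ x ∂(volume : Measure (RV n)), x ∉ Ω → E x = 0
  hgrad : IsSymGrad u E

/-- Weak convergence in `L²(s; Sym(n))`. -/
def WeakL2M {n : ℕ} (Ek : ℕ → MField n) (E : MField n) (s : Set (RV n)) : Prop :=
  ∀ G : MField n, L2MOn G s →
    Tendsto (fun k => ∫ x in s, mdot (Ek k x) (G x)) atTop
      (𝓝 (∫ x in s, mdot (E x) (G x)))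

/-- Weak convergence in `L²(s; ℝⁿ)`. -/
def WeakL2V {n : ℕ} (uk : ℕ → VField n) (u : VField n) (s : Set (RV n)) : Prop :=
  ∀ g : VField n, L2VOn g s →
    Tendsto (fun k => ∫ x in s, ∑ i, uk k x i * g x i) atTop
      (𝓝 (∫ x in s, ∑ i, u x i * g x i))

/-- Weak* convergence in `L∞(s)`. -/
def WeakStarLinf {n : ℕ} (fk : ℕ → RV n → ℝ) (f : RV n → ℝ) (s : Set (RV n)) : Prop :=
  ∀ h : RV n → ℝ, IntegrableOn h s volume →
    Tendsto (fun k => ∫ x in s, fk k x * h x) atTop (𝓝 (∫ x in s, f x * h x))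

/-- Weak convergence in `L¹(s)`. -/
def WeakL1 {n : ℕ} (fk : ℕ → RV n → ℝ) (f : RV n → ℝ) (s : Set (RV n)) : Prop :=
  ∀ g : RV n → ℝ, Measurable g →
    (∃ M : ℝ, ∀ᵐ x ∂(volume : Measure (RV n)), x ∈ s → |g x| ≤ M) →
    Tendsto (fun k => ∫ x in s, fk k x * g x) atTop (𝓝 (∫ x in s, f x * g x))

/-- Uniform integrability of a family on `s`. -/
def UnifIntOn {n : ℕ} (fk : ℕ → RV n → ℝ) (s : Set (RV n)) : Prop :=
  ∀ ε : ℝ, 0 < ε → ∃ η : ℝ, 0 < η ∧ ∀ A : Set (RV n), MeasurableSet A → A ⊆ s →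
    volume A < ENNReal.ofReal η → ∀ k, ∫ x in A, |fk k x| < ε

/-- The double-well integrand `min{½a|F+C|², ½b|F+D|²}`. -/
def phaseMin {n : ℕ} (a b : RV n → ℝ) (C D : MField n) (F : MField n) (x : RV n) : ℝ :=
  min (1 / 2 * a x * mdot (F x + C x) (F x + C x))
      (1 / 2 * b x * mdot (F x + D x) (F x + D x))

/-- The nonconvex energy. -/
def Jfun {n : ℕ} (Ω : Set (RV n)) (a b : RV n → ℝ) (C D : MField n) (F : MField n) : ℝ :=
  ∫ x in Ω, phaseMin a b C D F x

/-- The infimum `α` of the nonconvex problem over admissible pairs. -/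
def alphaInf {n : ℕ} (Ω : Set (RV n)) (a b : RV n → ℝ) (C D : MField n) : ℝ :=
  sInf { r : ℝ | ∃ P : AdmPair n Ω, r = Jfun Ω a b C D P.E }

/-- The convexified energy `∫ [½χₐa|F+C|² + ½χᵦb|F+D|²]`. -/
def Jconv {n : ℕ} (Ω : Set (RV n)) (χa χb a b : RV n → ℝ) (C D : MField n)
    (F : MField n) : ℝ :=
  ∫ x in Ω, (1 / 2 * χa x * a x * mdot (F x + C x) (F x + C x)
    + 1 / 2 * χb x * b x * mdot (F x + D x) (F x + D x))

/-- `A⁺ = (aC + bD)/2`. -/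
def Aplus {n : ℕ} (a b : RV n → ℝ) (C D : MField n) : MField n :=
  fun x => (2 : ℝ)⁻¹ • (a x • C x + b x • D x)

/-- `A⁻ = (bD − aC)/2`. -/
def Aminus {n : ℕ} (a b : RV n → ℝ) (C D : MField n) : MField n :=
  fun x => (2 : ℝ)⁻¹ • (b x • D x - a x • C x)

/-- The integrand on `Ω \ Ω₀`:
`(ab(C−D)/(b−a))·F + ((bD−aC)/(b−a))·q + ab(|C|²−|D|²)/(2(b−a)) − t·ab|C−D|²/(2(b−a))`. -/
def Goff {n : ℕ} (a b : RV n → ℝ) (C D : MField n) (F q : MField n) (t : RV n → ℝ)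
    (x : RV n) : ℝ :=
  a x * b x / (b x - a x) * mdot (C x - D x) (F x) +
    (b x - a x)⁻¹ * mdot (b x • D x - a x • C x) (q x) +
    a x * b x * (mdot (C x) (C x) - mdot (D x) (D x)) / (2 * (b x - a x)) -
    t x * (a x * b x * mdot (C x - D x) (C x - D x) / (2 * (b x - a x)))

/-- `Ω₀ = {x ∈ Ω : a(x) = b(x)}`. -/
def Omega0 {n : ℕ} (Ω : Set (RV n)) (a b : RV n → ℝ) : Set (RV n) :=
  {x ∈ Ω | a x = b x}

/-!
Since `(φ v, φ F + sym(∇φ ⊗ v))` is admissible whenever `(v, F)` is, a field `p` orthogonal to all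
admissible symmetrized gradients satisfies `∫ φ p·F = -∫ p·sym(∇φ ⊗ v)`: the derivatives move from
`v` to `φ`. Orthogonality passes to the weak limit `p`, so it is enough to pass to the limit in
`∫ pᵏ·sym(∇φ ⊗ uᵏ)`. This is a product of a weakly and a strongly convergent sequence in `L²`,
because `|sym(∇φ ⊗ (uᵏ - u))| ≤ |∇φ| |uᵏ - u|` and `∇φ` is bounded.
-/

section WeakStrong

variable {𝕜 H : Type*} [RCLike 𝕜] [NormedAddCommGroup H] [InnerProductSpace 𝕜 H]

theorem tendsto_inner_of_weak_of_strong [CompleteSpace H] {x y : ℕ → H} {x₀ y₀ : H}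
    (hx : ∀ h, Tendsto (fun k => inner 𝕜 (x k) h) atTop (𝓝 (inner 𝕜 x₀ h)))
    (hy : Tendsto y atTop (𝓝 y₀)) :
    Tendsto (fun k => inner 𝕜 (x k) (y k)) atTop (𝓝 (inner 𝕜 x₀ y₀)) := by
  obtain ⟨C, hC⟩ : ∃ C, ∀ k, ‖innerSL 𝕜 (x k)‖ ≤ C := by
    refine banach_steinhaus fun h => ?_
    obtain ⟨C, hC⟩ := (hx h).norm.bddAbove_range
    exact ⟨C, fun k => hC ⟨k, rfl⟩⟩
  have herror : Tendsto (fun k => inner 𝕜 (x k) (y k - y₀)) atTop (𝓝 0) := by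
    refine squeeze_zero_norm (a := fun k => C * ‖y k - y₀‖)
      (fun k => (innerSL 𝕜 (x k)).le_of_opNorm_le (hC k) _) ?_
    simpa using (tendsto_iff_norm_sub_tendsto_zero.1 hy).const_mul C
  simpa [← inner_add_right] using (hx y₀).add herror

variable {α : Type*} [MeasurableSpace α] {μ : Measure α}

theorem inner_toLp_toLp {f g : α → H} (hf : MemLp f 2 μ) (hg : MemLp g 2 μ) :
    inner 𝕜 (hf.toLp f) (hg.toLp g) = ∫ a, inner 𝕜 (f a) (g a) ∂μ := by
  rw [L2.inner_def]
  refine integral_congr_ae ?_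
  filter_upwards [hf.coeFn_toLp, hg.coeFn_toLp] with a hfa hga
  rw [hfa, hga]

theorem norm_memLp_toLp_sq {F : Type*} [NormedAddCommGroup F] [InnerProductSpace ℝ F] {f : α → F}
    (hf : MemLp f 2 μ) : ‖hf.toLp f‖ ^ 2 = ∫ a, ‖f a‖ ^ 2 ∂μ := by
  simp only [← real_inner_self_eq_norm_sq, inner_toLp_toLp]

theorem tendsto_integral_inner_of_weak_of_strong {F : Type*} [NormedAddCommGroup F]
    [InnerProductSpace ℝ F] [CompleteSpace F] {f g : ℕ → α → F} {f₀ g₀ : α → F}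
    (hf : ∀ k, MemLp (f k) 2 μ) (hf₀ : MemLp f₀ 2 μ)
    (hg : ∀ k, MemLp (g k) 2 μ) (hg₀ : MemLp g₀ 2 μ)
    (hweak : ∀ h : Lp F 2 μ, Tendsto (fun k => ∫ a, inner ℝ (f k a) (h a) ∂μ) atTop
      (𝓝 (∫ a, inner ℝ (f₀ a) (h a) ∂μ)))
    (hstrong : Tendsto (fun k => ∫ a, ‖g k a - g₀ a‖ ^ 2 ∂μ) atTop (𝓝 0)) :
    Tendsto (fun k => ∫ a, inner ℝ (f k a) (g k a) ∂μ) atTop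
      (𝓝 (∫ a, inner ℝ (f₀ a) (g₀ a) ∂μ)) := by
  have hweak_Lp : ∀ h : Lp F 2 μ, Tendsto (fun k => inner ℝ ((hf k).toLp (f k)) h) atTop
      (𝓝 (inner ℝ (hf₀.toLp f₀) h)) := fun h => by
    rw [← Lp.toLp_coeFn h (Lp.memLp h)]
    simpa only [inner_toLp_toLp] using hweak h
  have hstrong_Lp : Tendsto (fun k => (hg k).toLp (g k)) atTop (𝓝 (hg₀.toLp g₀)) := by
    have hnorm : ∀ k, ‖(hg k).toLp (g k) - hg₀.toLp g₀‖ = √(∫ a, ‖g k a - g₀ a‖ ^ 2 ∂μ) :=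
      fun k => by
        rw [← MemLp.toLp_sub, ← Real.sqrt_sq (norm_nonneg _), norm_memLp_toLp_sq]
        rfl
    rw [tendsto_iff_norm_sub_tendsto_zero]
    simpa only [hnorm, Real.sqrt_zero] using hstrong.sqrt
  simpa only [inner_toLp_toLp] using tendsto_inner_of_weak_of_strong hweak_Lp hstrong_Lp

end WeakStrong

section FrobeniusVec

variable {n : ℕ}

/-- The matrix `P` as a vector of `ℝ^(n × n)`, which makes the Frobenius product `mdot` the
Euclidean inner product and so gives access to `L²` spaces of matrix fields. -/
def frobeniusVec : Mat n →ₗ[ℝ] EuclideanSpace ℝ (Fin n × Fin n) where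
  toFun P := WithLp.toLp 2 fun ij => P ij.1 ij.2
  map_add' _ _ := rfl
  map_smul' _ _ := rfl

theorem frobeniusVec_apply (P : Mat n) (i j : Fin n) : frobeniusVec P (i, j) = P i j := rfl

theorem inner_frobeniusVec (P Q : Mat n) :
    inner ℝ (frobeniusVec P) (frobeniusVec Q) = mdot P Q := by
  simp [frobeniusVec_apply, mdot, PiLp.inner_apply, Fintype.sum_prod_type, mul_comm]

theorem norm_frobeniusVec_sq (P : Mat n) : ‖frobeniusVec P‖ ^ 2 = mdot P P := by
  rw [← real_inner_self_eq_norm_sq, inner_frobeniusVec]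

theorem euclidean_norm_toLp_sq {ι : Type*} [Fintype ι] (a : ι → ℝ) :
    ‖WithLp.toLp 2 a‖ ^ 2 = ∑ i, a i * a i := by
  rw [EuclideanSpace.real_norm_sq_eq]
  simp only [pow_two]

theorem mdot_add_right (P Q R : Mat n) : mdot P (Q + R) = mdot P Q + mdot P R := by
  simp only [← inner_frobeniusVec, map_add, inner_add_right]

theorem mdot_smul_right (c : ℝ) (P Q : Mat n) : mdot P (c • Q) = c * mdot P Q := by
  simp only [← inner_frobeniusVec, map_smul, real_inner_smul_right]

/-- The symmetrized tensor product `sym(a ⊗ b) = (a ⊗ b + b ⊗ a) / 2`, the correction term in the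
product rule for symmetrized gradients. -/
def symOuter (a b : RV n) : Mat n := Matrix.of fun i j => (a i * b j + b i * a j) / 2

theorem symOuter_comm_apply (a b : RV n) (i j : Fin n) :
    symOuter a b i j = symOuter a b j i := by
  simp only [symOuter, Matrix.of_apply]
  ring

theorem symOuter_zero_right (a : RV n) : symOuter a 0 = 0 := by
  ext i j
  simp [symOuter]

theorem symOuter_sub_right (a b c : RV n) :
    symOuter a (b - c) = symOuter a b - symOuter a c := by
  ext i j
  simp only [symOuter, Matrix.of_apply, Matrix.sub_apply, Pi.sub_apply]
  ring

theorem norm_frobeniusVec_symOuter_le (a b : RV n) :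
    ‖frobeniusVec (symOuter a b)‖ ≤ ‖WithLp.toLp 2 a‖ * ‖WithLp.toLp 2 b‖ := by
  refine (sq_le_sq₀ (norm_nonneg _) (by positivity)).1 ?_
  rw [mul_pow, norm_frobeniusVec_sq, euclidean_norm_toLp_sq, euclidean_norm_toLp_sq]
  calc mdot (symOuter a b) (symOuter a b)
      ≤ ∑ i, ∑ j, ((a i * a i) * (b j * b j) / 2 + (b i * b i) * (a j * a j) / 2) := by
        refine Finset.sum_le_sum fun i _ => Finset.sum_le_sum fun j _ => ?_
        simp only [symOuter, Matrix.of_apply]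
        linarith [sq_nonneg (a i * b j - b i * a j)]
    _ = (∑ i, a i * a i) * ∑ j, b j * b j := by
        simp only [Finset.sum_add_distrib, ← Finset.sum_div, ← Finset.sum_mul_sum]
        ring

end FrobeniusVec

section L2Fields

variable {n : ℕ} {s t : Set (RV n)}

theorem measurable_frobeniusVec {E : MField n} (hE : ∀ i j, Measurable fun x => E x i j) :
    Measurable fun x => frobeniusVec (E x) :=
  (WithLp.measurable_toLp 2 _).comp (measurable_pi_lambda _ fun ij => hE ij.1 ij.2)

theorem l2MOn_iff_memLp {E : MField n} :
    L2MOn E s ↔ (∀ i j, Measurable fun x => E x i j) ∧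
      MemLp (fun x => frobeniusVec (E x)) 2 (volume.restrict s) :=
  and_congr_right fun hE => by
    rw [memLp_two_iff_integrable_sq_norm (measurable_frobeniusVec hE).aestronglyMeasurable]
    simp only [norm_frobeniusVec_sq, IntegrableOn]

theorem l2VOn_iff_memLp {u : VField n} :
    L2VOn u s ↔ (∀ i, Measurable fun x => u x i) ∧
      MemLp (fun x => WithLp.toLp 2 (u x)) 2 (volume.restrict s) :=
  and_congr_right fun hu => by
    have hmeas : Measurable fun x => WithLp.toLp 2 (u x) :=
      (WithLp.measurable_toLp 2 _).comp (measurable_pi_lambda _ hu)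
    rw [memLp_two_iff_integrable_sq_norm hmeas.aestronglyMeasurable]
    simp only [euclidean_norm_toLp_sq, IntegrableOn]

theorem L2MOn.memLp {E : MField n} (hE : L2MOn E s) :
    MemLp (fun x => frobeniusVec (E x)) 2 (volume.restrict s) :=
  (l2MOn_iff_memLp.1 hE).2

theorem L2VOn.memLp {u : VField n} (hu : L2VOn u s) :
    MemLp (fun x => WithLp.toLp 2 (u x)) 2 (volume.restrict s) :=
  (l2VOn_iff_memLp.1 hu).2

theorem L2MOn.mono {E : MField n} (hE : L2MOn E t) (hst : s ⊆ t) : L2MOn E s :=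
  ⟨hE.1, hE.2.mono_set hst⟩

theorem L2VOn.mono {u : VField n} (hu : L2VOn u t) (hst : s ⊆ t) : L2VOn u s :=
  ⟨hu.1, hu.2.mono_set hst⟩

theorem L2MOn.locallyIntegrable {E : MField n} (hE : L2MOn E Set.univ) (i j : Fin n) :
    LocallyIntegrable fun x => E x i j := by
  have hmem := hE.memLp.eval_piLp (i, j)
  rw [Measure.restrict_univ] at hmem
  exact hmem.locallyIntegrable one_le_two

theorem L2VOn.locallyIntegrable {u : VField n} (hu : L2VOn u Set.univ) (i : Fin n) :
    LocallyIntegrable fun x => u x i := by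
  have hmem := hu.memLp.eval_piLp i
  rw [Measure.restrict_univ] at hmem
  exact hmem.locallyIntegrable one_le_two

theorem L2MOn.integrableOn_mdot {E F : MField n} (hE : L2MOn E s) (hF : L2MOn F s) :
    IntegrableOn (fun x => mdot (E x) (F x)) s :=
  integrable_finsetSum _ fun i _ => integrable_finsetSum _ fun j _ =>
    (hE.memLp.eval_piLp (i, j)).integrable_mul (hF.memLp.eval_piLp (i, j))

theorem L2MOn.add {E F : MField n} (hE : L2MOn E s) (hF : L2MOn F s) :
    L2MOn (fun x => E x + F x) s :=
  l2MOn_iff_memLp.2 ⟨fun i j => (hE.1 i j).add (hF.1 i j), by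
    simpa only [map_add] using! hE.memLp.add hF.memLp⟩

theorem L2VOn.sub {u v : VField n} (hu : L2VOn u s) (hv : L2VOn v s) :
    L2VOn (fun x => u x - v x) s :=
  l2VOn_iff_memLp.2 ⟨fun i => (hu.1 i).sub (hv.1 i), hu.memLp.sub hv.memLp⟩

theorem L2MOn.smul_of_bounded {φ : RV n → ℝ} {E : MField n} {M : ℝ} (hφ : Measurable φ)
    (hM : ∀ x, |φ x| ≤ M) (hE : L2MOn E s) : L2MOn (fun x => φ x • E x) s := by
  have hmeas : ∀ i j, Measurable fun x => (φ x • E x) i j := fun i j => hφ.mul (hE.1 i j)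
  refine l2MOn_iff_memLp.2 ⟨hmeas, hE.memLp.of_le_mul (c := M)
    (measurable_frobeniusVec hmeas).aestronglyMeasurable (.of_forall fun x => ?_)⟩
  rw [map_smul, norm_smul]
  exact mul_le_mul_of_nonneg_right (hM x) (norm_nonneg _)

theorem L2VOn.smul_of_bounded {φ : RV n → ℝ} {u : VField n} {M : ℝ} (hφ : Measurable φ)
    (hM : ∀ x, |φ x| ≤ M) (hu : L2VOn u s) : L2VOn (fun x => φ x • u x) s := by
  refine l2VOn_iff_memLp.2 ⟨fun i => hφ.mul (hu.1 i), hu.memLp.of_le_mul (c := M)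
    (hφ.aestronglyMeasurable.smul hu.memLp.1) (.of_forall fun x => ?_)⟩
  rw [WithLp.toLp_smul, norm_smul]
  exact mul_le_mul_of_nonneg_right (hM x) (norm_nonneg _)

theorem L2VOn.symOuter_of_bounded {a u : VField n} {N : ℝ} (hu : L2VOn u s)
    (ha : ∀ i, Measurable fun x => a x i) (hN : ∀ x, ‖WithLp.toLp 2 (a x)‖ ≤ N) :
    L2MOn (fun x => symOuter (a x) (u x)) s := by
  have hmeas : ∀ i j, Measurable fun x => symOuter (a x) (u x) i j := fun i j =>
    (((ha i).mul (hu.1 j)).add ((hu.1 i).mul (ha j))).div_const 2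
  refine l2MOn_iff_memLp.2 ⟨hmeas, hu.memLp.of_le_mul (c := N)
    (measurable_frobeniusVec hmeas).aestronglyMeasurable (.of_forall fun x => ?_)⟩
  exact (norm_frobeniusVec_symOuter_le _ _).trans
    (mul_le_mul_of_nonneg_right (hN x) (norm_nonneg _))

theorem setIntegral_norm_sq_symOuter_le {a u : VField n} {N : ℝ}
    (hN : ∀ x, ‖WithLp.toLp 2 (a x)‖ ≤ N) (hu : L2VOn u Set.univ) :
    ∫ x in s, ‖frobeniusVec (symOuter (a x) (u x))‖ ^ 2 ≤ N ^ 2 * ∫ x, ∑ i, u x i ^ 2 := by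
  have hbound : ∀ x, ‖frobeniusVec (symOuter (a x) (u x))‖ ^ 2 ≤ N ^ 2 * ∑ i, u x i ^ 2 :=
    fun x => by
      rw [← EuclideanSpace.real_norm_sq_eq (WithLp.toLp 2 (u x)), ← mul_pow]
      gcongr
      exact (norm_frobeniusVec_symOuter_le _ _).trans
        (mul_le_mul_of_nonneg_right (hN x) (norm_nonneg _))
  have hint : Integrable fun x => N ^ 2 * ∑ i, u x i ^ 2 := by
    simpa only [← pow_two, Measure.restrict_univ] using hu.2.const_mul (N ^ 2)
  rw [← integral_const_mul]
  exact (integral_mono_of_nonneg (.of_forall fun x => sq_nonneg _) hint.restrict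
    (.of_forall hbound)).trans
      (setIntegral_le_integral hint (.of_forall fun x => (sq_nonneg _).trans (hbound x)))

theorem WeakL2M.tendsto_integral_mdot {pk Gk : ℕ → MField n} {p G : MField n}
    (hw : WeakL2M pk p s) (hpk : ∀ k, L2MOn (pk k) s) (hp : L2MOn p s)
    (hGk : ∀ k, L2MOn (Gk k) s) (hG : L2MOn G s)
    (hstrong : Tendsto (fun k => ∫ x in s, ‖frobeniusVec (Gk k x - G x)‖ ^ 2) atTop (𝓝 0)) :
    Tendsto (fun k => ∫ x in s, mdot (pk k x) (Gk k x)) atTop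
      (𝓝 (∫ x in s, mdot (p x) (G x))) := by
  simp only [← inner_frobeniusVec]
  refine tendsto_integral_inner_of_weak_of_strong (fun k => (hpk k).memLp) hp.memLp
    (fun k => (hGk k).memLp) hG.memLp (fun h => ?_) (by simpa only [map_sub] using hstrong)
  let H : MField n := fun x => Matrix.of fun i j => h x (i, j)
  have hH : L2MOn H s := l2MOn_iff_memLp.2
    ⟨fun i j => (EuclideanSpace.proj (𝕜 := ℝ) (i, j)).continuous.measurable.comp
      (Lp.stronglyMeasurable h).measurable, Lp.memLp h⟩
  simpa only [← inner_frobeniusVec] using! hw H hH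

end L2Fields

section ProductRule

variable {n : ℕ} {φ ψ : RV n → ℝ}

/-- The vector `∇φ` of partial derivatives of `φ`. `RV n` carries the sup norm, so Mathlib's
`gradient` is not available. -/
def coordGrad (φ : RV n → ℝ) (x : RV n) : RV n := fun i => fderiv ℝ φ x (Pi.single i 1)

theorem continuous_coordGrad (hφ : ContDiff ℝ 1 φ) (i : Fin n) :
    Continuous fun x => coordGrad φ x i :=
  (hφ.continuous_fderiv one_ne_zero).clm_apply continuous_const

theorem coordGrad_mul {x : RV n} (hφ : DifferentiableAt ℝ φ x) (hψ : DifferentiableAt ℝ ψ x) :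
    coordGrad (fun y => φ y * ψ y) x = φ x • coordGrad ψ x + ψ x • coordGrad φ x := by
  ext i
  simp [coordGrad, fderiv_fun_mul hφ hψ]

theorem fderiv_apply_eq_sum_coordGrad (φ : RV n → ℝ) (x v : RV n) :
    fderiv ℝ φ x v = ∑ i, v i * coordGrad φ x i := by
  conv_lhs => rw [pi_eq_sum_univ' v]
  simp [coordGrad, map_sum]

-- `|∇φ|² = Dφ(∇φ) ≤ ‖Dφ‖ |∇φ|_∞ ≤ ‖Dφ‖ |∇φ|`.
theorem norm_toLp_coordGrad_le (φ : RV n → ℝ) (x : RV n) :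
    ‖WithLp.toLp 2 (coordGrad φ x)‖ ≤ ‖fderiv ℝ φ x‖ := by
  set g := coordGrad φ x
  have hsup : ‖g‖ ≤ ‖WithLp.toLp 2 g‖ :=
    (pi_norm_le_iff_of_nonneg (norm_nonneg _)).2 (PiLp.norm_apply_le (WithLp.toLp 2 g))
  have hsq : ‖WithLp.toLp 2 g‖ ^ 2 ≤ ‖fderiv ℝ φ x‖ * ‖WithLp.toLp 2 g‖ := calc
    ‖WithLp.toLp 2 g‖ ^ 2 = fderiv ℝ φ x g := by
      rw [euclidean_norm_toLp_sq, fderiv_apply_eq_sum_coordGrad]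
    _ ≤ ‖fderiv ℝ φ x‖ * ‖g‖ := (le_abs_self _).trans ((fderiv ℝ φ x).le_opNorm g)
    _ ≤ ‖fderiv ℝ φ x‖ * ‖WithLp.toLp 2 g‖ := by gcongr
  nlinarith [norm_nonneg (WithLp.toLp 2 g), norm_nonneg (fderiv ℝ φ x)]

theorem L2VOn.symOuter_coordGrad {u : VField n} {s : Set (RV n)} {N : ℝ} (hu : L2VOn u s)
    (hφ : ContDiff ℝ 1 φ) (hN : ∀ x, ‖fderiv ℝ φ x‖ ≤ N) :
    L2MOn (fun x => symOuter (coordGrad φ x) (u x)) s :=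
  hu.symOuter_of_bounded (fun i => (continuous_coordGrad hφ i).measurable)
    fun x => (norm_toLp_coordGrad_le φ x).trans (hN x)

theorem integrable_mul_of_hasCompactSupport {f η : RV n → ℝ} (hf : LocallyIntegrable f)
    (hη : Continuous η) (hηc : HasCompactSupport η) : Integrable fun x => f x * η x := by
  simpa only [smul_eq_mul, mul_comm] using hf.integrable_smul_left_of_hasCompactSupport hη hηc

theorem integrable_symOuter_coordGrad_mul {u : VField n}
    (hu : ∀ i, LocallyIntegrable fun x => u x i) (hφ : ContDiff ℝ 1 φ) (hψ : Continuous ψ)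
    (hψc : HasCompactSupport ψ) (i j : Fin n) :
    Integrable fun x => symOuter (coordGrad φ x) (u x) i j * ψ x := by
  have hterm (k l : Fin n) : Integrable fun x => u x k * (coordGrad φ x l * ψ x) :=
    integrable_mul_of_hasCompactSupport (hu k) ((continuous_coordGrad hφ l).mul hψ) hψc.mul_left
  refine (((hterm i j).add (hterm j i)).div_const 2).congr (.of_forall fun x => ?_)
  simp only [symOuter, Matrix.of_apply, Pi.add_apply]
  ring

theorem integral_symGrad_test_mul {u : VField n} (hu : ∀ i, LocallyIntegrable fun x => u x i)
    (hφ : ContDiff ℝ 1 φ) (hψ : ContDiff ℝ 1 ψ) (hψc : HasCompactSupport ψ) (i j : Fin n) :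
    ∫ x, (u x i * coordGrad (fun y => φ y * ψ y) x j +
        u x j * coordGrad (fun y => φ y * ψ y) x i) =
      (∫ x, ((φ x • u x) i * coordGrad ψ x j + (φ x • u x) j * coordGrad ψ x i)) +
        2 * ∫ x, symOuter (coordGrad φ x) (u x) i j * ψ x := by
  have hφu (k l : Fin n) : Integrable fun x => (φ x • u x) k * coordGrad ψ x l := by
    refine (integrable_mul_of_hasCompactSupport (hu k) (hφ.continuous.mul
      (continuous_coordGrad hψ l)) (hψc.fderiv_apply (𝕜 := ℝ) _).mul_left).congr
      (.of_forall fun x => ?_)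
    simp only [Pi.mul_apply, Pi.smul_apply, smul_eq_mul]
    ring
  have hφu_sum : Integrable fun x =>
      (φ x • u x) i * coordGrad ψ x j + (φ x • u x) j * coordGrad ψ x i :=
    (hφu i j).add (hφu j i)
  rw [← integral_const_mul, ← integral_add hφu_sum 
    ((integrable_symOuter_coordGrad_mul hu hφ hψ.continuous hψc i j).const_mul 2)]
  congr with x
  rw [coordGrad_mul (hφ.differentiable one_ne_zero x) (hψ.differentiable one_ne_zero x)]
  simp only [symOuter, Matrix.of_apply, Pi.add_apply, Pi.smul_apply, smul_eq_mul]
  ring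

theorem IsSymGrad.smul {u : VField n} {E : MField n} (hgrad : IsSymGrad u E)
    (hu : ∀ i, LocallyIntegrable fun x => u x i)
    (hE : ∀ i j, LocallyIntegrable fun x => E x i j) (hφ : ContDiff ℝ (⊤ : ℕ∞) φ) :
    IsSymGrad (fun x => φ x • u x) (fun x => φ x • E x + symOuter (coordGrad φ x) (u x)) := by
  intro i j ψ hψ hψc
  have hφ₁ : ContDiff ℝ 1 φ := hφ.of_le (by simp)
  have hψ₁ : ContDiff ℝ 1 ψ := hψ.of_le (by simp)
  have hEφψ : Integrable fun x => E x i j * (φ x * ψ x) :=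
    integrable_mul_of_hasCompactSupport (hE i j) (hφ.mul hψ).continuous hψc.mul_left
  have htest : ∫ x, E x i j * (φ x * ψ x) =
      -(1 / 2) * ∫ x, (u x i * coordGrad (fun y => φ y * ψ y) x j +
        u x j * coordGrad (fun y => φ y * ψ y) x i) :=
    hgrad i j _ (hφ.mul hψ) hψc.mul_left
  calc ∫ x, (φ x • E x + symOuter (coordGrad φ x) (u x)) i j * ψ x
      = ∫ x, (E x i j * (φ x * ψ x) + symOuter (coordGrad φ x) (u x) i j * ψ x) := by
        congr with x
        simp only [Matrix.add_apply, Matrix.smul_apply, smul_eq_mul]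
        ring
    _ = (∫ x, E x i j * (φ x * ψ x)) + ∫ x, symOuter (coordGrad φ x) (u x) i j * ψ x :=
        integral_add hEφψ (integrable_symOuter_coordGrad_mul hu hφ₁ hψ₁.continuous hψc i j)
    _ = -(1 / 2) * ∫ x, ((φ x • u x) i * coordGrad ψ x j + (φ x • u x) j * coordGrad ψ x i) := by
        rw [htest, integral_symGrad_test_mul hu hφ₁ hψ₁ hψc i j]
        ring

end ProductRule

/-- The product `(φ v, φ F + sym(∇φ ⊗ v))` of an admissible pair `(v, F)` with a smooth function
`φ`, which serves as test pair for fields orthogonal to all symmetrized gradients. -/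
def AdmPair.smul {n : ℕ} {Ω : Set (RV n)} (W : AdmPair n Ω) {φ : RV n → ℝ}
    (hφ : ContDiff ℝ (⊤ : ℕ∞) φ) {M N : ℝ} (hM : ∀ x, |φ x| ≤ M)
    (hN : ∀ x, ‖fderiv ℝ φ x‖ ≤ N) : AdmPair n Ω where
  u := fun x => φ x • W.u x
  E := fun x => φ x • W.E x + symOuter (coordGrad φ x) (W.u x)
  hu := W.hu.smul_of_bounded hφ.continuous.measurable hM
  hE := (W.hE.smul_of_bounded hφ.continuous.measurable hM).add
    (W.hu.symOuter_coordGrad (hφ.of_le (by simp)) hN)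
  hsym := by
    filter_upwards [W.hsym] with x hx hxs i j
    simp only [Matrix.add_apply, Matrix.smul_apply, hx hxs i j, symOuter_comm_apply _ _ i j]
  huz := by
    filter_upwards [W.huz] with x hu hxs
    rw [hu hxs, smul_zero]
  hEz := by
    filter_upwards [W.huz, W.hEz] with x hu hE hxs
    rw [hu hxs, hE hxs, smul_zero, symOuter_zero_right, add_zero]
  hgrad := W.hgrad.smul W.hu.locallyIntegrable W.hE.locallyIntegrable hφ

section SymDivFree

variable {n : ℕ} {Ω : Set (RV n)}

/-- `p` is orthogonal to all symmetrized gradients of admissible fields: for symmetric `p`, the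
weak form of `div p = 0` in `Ω`. -/
def IsWeakDivFree (Ω : Set (RV n)) (p : MField n) : Prop :=
  ∀ W : AdmPair n Ω, ∫ x in Ω, mdot (p x) (W.E x) = 0

theorem IsWeakDivFree.of_weakL2M {pk : ℕ → MField n} {p : MField n}
    (hpk : ∀ k, IsWeakDivFree Ω (pk k)) (hw : WeakL2M pk p Ω) : IsWeakDivFree Ω p := fun W =>
  tendsto_nhds_unique (hw W.E (W.hE.mono Ω.subset_univ))
    (tendsto_const_nhds.congr fun k => (hpk k W).symm)

theorem IsWeakDivFree.integral_mul_mdot {p : MField n} (hdiv : IsWeakDivFree Ω p)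
    (hp : L2MOn p Ω) (W : AdmPair n Ω) {φ : RV n → ℝ} (hφ : ContDiff ℝ (⊤ : ℕ∞) φ) {M N : ℝ}
    (hM : ∀ x, |φ x| ≤ M) (hN : ∀ x, ‖fderiv ℝ φ x‖ ≤ N) :
    ∫ x in Ω, φ x * mdot (p x) (W.E x) =
      -∫ x in Ω, mdot (p x) (symOuter (coordGrad φ x) (W.u x)) := by
  have hE : L2MOn (fun x => φ x • W.E x) Ω :=
    (W.hE.mono Ω.subset_univ).smul_of_bounded hφ.continuous.measurable hM
  have hT : L2MOn (fun x => symOuter (coordGrad φ x) (W.u x)) Ω :=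
    (W.hu.mono Ω.subset_univ).symOuter_coordGrad (hφ.of_le (by simp)) hN
  have hzero := hdiv (W.smul hφ hM hN)
  simp only [AdmPair.smul, mdot_add_right] at hzero
  rw [integral_add (hp.integrableOn_mdot hE) (hp.integrableOn_mdot hT)] at hzero
  simpa only [mdot_smul_right] using eq_neg_of_add_eq_zero_left hzero

end SymDivFree

theorem statement6_general {n : ℕ} {Ω : Set (RV n)} (P : ℕ → AdmPair n Ω) (Q : AdmPair n Ω)
    {pk : ℕ → MField n} {p : MField n} (hpk : ∀ k, L2MOn (pk k) Ω) (hp : L2MOn p Ω)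
    (hstrong : Tendsto (fun k => ∫ x, ∑ i, ((P k).u x i - Q.u x i) ^ 2) atTop (𝓝 0))
    (hdiv : ∀ k, IsWeakDivFree Ω (pk k)) (hw : WeakL2M pk p Ω) {φ : RV n → ℝ}
    (hφ : ContDiff ℝ (⊤ : ℕ∞) φ) {M N : ℝ} (hM : ∀ x, |φ x| ≤ M)
    (hN : ∀ x, ‖fderiv ℝ φ x‖ ≤ N) :
    Tendsto (fun k => ∫ x in Ω, φ x * mdot (pk k x) ((P k).E x)) atTop
      (𝓝 (∫ x in Ω, φ x * mdot (p x) (Q.E x))) := by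
  have htensor (W : AdmPair n Ω) : L2MOn (fun x => symOuter (coordGrad φ x) (W.u x)) Ω :=
    (W.hu.mono Ω.subset_univ).symOuter_coordGrad (hφ.of_le (by simp)) hN
  have hlim : Tendsto (fun k => N ^ 2 * ∫ x, ∑ i, ((P k).u x i - Q.u x i) ^ 2) atTop (𝓝 0) := by
    simpa only [mul_zero] using hstrong.const_mul (N ^ 2)
  have htensor_strong : Tendsto (fun k => ∫ x in Ω, ‖frobeniusVec
      (symOuter (coordGrad φ x) ((P k).u x) - symOuter (coordGrad φ x) (Q.u x))‖ ^ 2)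
      atTop (𝓝 0) := by
    refine squeeze_zero (fun k => integral_nonneg fun x => sq_nonneg _) (fun k => ?_) hlim
    simp only [← symOuter_sub_right]
    exact setIntegral_norm_sq_symOuter_le (fun x => (norm_toLp_coordGrad_le φ x).trans (hN x))
      ((P k).hu.sub Q.hu)
  have hp_div : IsWeakDivFree Ω p := .of_weakL2M hdiv hw
  rw [hp_div.integral_mul_mdot hp Q hφ hM hN]
  simp only [fun k => (hdiv k).integral_mul_mdot (hpk k) (P k) hφ hM hN]
  exact (hw.tendsto_integral_mdot hpk hp (fun k => htensor (P k)) (htensor Q) htensor_strong).neg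

/-- convergence of `∫ φ pᵏ·Eᵏ` for smooth bounded test functions,
step (P-3) in the proof of the lemma. -/
theorem statement6 {n : ℕ} (Ω : Set (RV n)) (hΩo : IsOpen Ω)
    (hΩb : Bornology.IsBounded Ω)
    (P : ℕ → AdmPair n Ω) (Q : AdmPair n Ω)
    (pk : ℕ → MField n) (p : MField n)
    (hpkL2 : ∀ k, L2MOn (pk k) Ω) (hpkS : ∀ k, SymOn (pk k) Ω)
    (hpL2 : L2MOn p Ω) (hpS : SymOn p Ω)
    -- uᵏ → u strongly in L²(ℝⁿ; ℝⁿ)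
    (hstrong : Tendsto (fun k => ∫ x, ∑ i, ((P k).u x i - Q.u x i) ^ 2) atTop (𝓝 0))
    -- each pᵏ annihilates all symmetrized gradients
    (hker : ∀ k, ∀ W : AdmPair n Ω, ∫ x in Ω, mdot (pk k x) (W.E x) = 0)
    -- pᵏ → p weakly in L²(Ω; Sym(n))
    (hpw : WeakL2M pk p Ω) :
    ∀ φ : RV n → ℝ, ContDiff ℝ (⊤ : ℕ∞) φ → (∃ M : ℝ, ∀ x, |φ x| ≤ M) →
      (∃ M : ℝ, ∀ x, ‖fderiv ℝ φ x‖ ≤ M) →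
      Tendsto (fun k => ∫ x in Ω, φ x * mdot (pk k x) ((P k).E x)) atTop
        (𝓝 (∫ x in Ω, φ x * mdot (p x) (Q.E x))) := by
  rintro φ hφ ⟨M, hM⟩ ⟨N, hN⟩
  exact statement6_general P Q hpkL2 hpL2 hstrong hker hpw hφ hM hN

end
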